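/- Let f : ℝ² → ℝ² be a C^∞ map with f(0)=0 of the form f = (x, xy + y⁷ + Σ_{i+j≥8} a_{ij} x^i y^j). Then a_{09} − (7/12)a_{08}² ≠ 0 if and only if there exist ε ∈ {1,−1} and α, β ∈ ℝ such that j¹¹f(0) is A¹¹-equivalent to the 11-jet at 0 of (x,y) ↦ (x, xy + y⁷ + εy⁹ + αy¹⁰ + βy¹¹). -/

import Mathlib

open Filter Topology

noncomputable section

/-- Directional derivative of a scalar function. -/
def dop (v : ℝ × ℝ) (g : ℝ × ℝ → ℝ) : ℝ × ℝ → ℝ :=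
  fun p => fderiv ℝ g p v

/-- Partial derivative operator in the first coordinate. -/
def pdx : (ℝ × ℝ → ℝ) → ℝ × ℝ → ℝ := dop (1, 0)

/-- Partial derivative operator in the second coordinate. -/
def pdy : (ℝ × ℝ → ℝ) → ℝ × ℝ → ℝ := dop (0, 1)

/-- Taylor coefficient `a_{ij} = ∂_x^i ∂_y^j g(0,0) / (i! j!)` of `g` at the origin. -/
def tcoeff (g : ℝ × ℝ → ℝ) (i j : ℕ) : ℝ :=
  (pdx^[i] (pdy^[j] g)) 0 / (Nat.factorial i * Nat.factorial j)

/-- The Jacobian determinant `λ_f` of a map `f : ℝ² → ℝ²`. -/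
def jacDet (f : ℝ × ℝ → ℝ × ℝ) (p : ℝ × ℝ) : ℝ :=
  (fderiv ℝ f p (1, 0)).1 * (fderiv ℝ f p (0, 1)).2 -
    (fderiv ℝ f p (1, 0)).2 * (fderiv ℝ f p (0, 1)).1

/-- `f` has corank one at `0` : the derivative of `f` at `0` has rank one. -/
def CorankOne (f : ℝ × ℝ → ℝ × ℝ) : Prop :=
  LinearMap.rank ((fderiv ℝ f 0).toLinearMap) = 1

/-- `η` is a null vector field for `f` near `0`. -/
def IsNullVF (f η : ℝ × ℝ → ℝ × ℝ) : Prop :=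
  η 0 ≠ 0 ∧ ∃ U ∈ 𝓝 (0 : ℝ × ℝ),
    ContDiffOn ℝ (⊤ : ℕ∞) η U ∧ ∀ p ∈ U, jacDet f p = 0 → fderiv ℝ f p (η p) = 0

/-- The derivative `(ηg)(p) = Dg(p)(η(p))` of `g` along the vector field `η`. -/
def etaD (η : ℝ × ℝ → ℝ × ℝ) (g : ℝ × ℝ → ℝ) : ℝ × ℝ → ℝ :=
  fun p => fderiv ℝ g p (η p)

/-- The iterated derivative `η^k g` along the vector field `η`. -/
def etaIter (η : ℝ × ℝ → ℝ × ℝ) : ℕ → (ℝ × ℝ → ℝ) → ℝ × ℝ → ℝ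
  | 0, g => g
  | k + 1, g => etaD η (etaIter η k g)

/-- The Hessian matrix of second partial derivatives of `g` at `0`. -/
def hess (g : ℝ × ℝ → ℝ) : Matrix (Fin 2) (Fin 2) ℝ :=
  !![pdx (pdx g) 0, pdx (pdy g) 0; pdy (pdx g) 0, pdy (pdy g) 0]

/-- `A^r`-equivalence of the `r`-jets at `0` of two map-germs `(ℝ²,0) → (ℝ²,0)`. -/
def JetEquiv (r : ℕ) (f g : ℝ × ℝ → ℝ × ℝ) : Prop :=
  ∃ φ ψ : ℝ × ℝ → ℝ × ℝ,
    ContDiff ℝ (⊤ : ℕ∞) φ ∧ ContDiff ℝ (⊤ : ℕ∞) ψ ∧ φ 0 = 0 ∧ ψ 0 = 0 ∧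
    Function.Bijective (⇑(fderiv ℝ φ 0)) ∧ Function.Bijective (⇑(fderiv ℝ ψ 0)) ∧
    ∀ i ≤ r, iteratedFDeriv ℝ i (ψ ∘ f ∘ φ) 0 = iteratedFDeriv ℝ i g 0

/-- `A`-equivalence of two map-germs `(ℝ²,0) → (ℝ²,0)`. -/
def AEquiv (f g : ℝ × ℝ → ℝ × ℝ) : Prop :=
  ∃ φ ψ : ℝ × ℝ → ℝ × ℝ,
    ContDiff ℝ (⊤ : ℕ∞) φ ∧ ContDiff ℝ (⊤ : ℕ∞) ψ ∧ φ 0 = 0 ∧ ψ 0 = 0 ∧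
    Function.Bijective (⇑(fderiv ℝ φ 0)) ∧ Function.Bijective (⇑(fderiv ℝ ψ 0)) ∧
    ∀ᶠ p in 𝓝 (0 : ℝ × ℝ), ψ (f (φ p)) = g p

/-- `f` has the form `(x, g(x,y))` where `g` is `C^∞` and the Taylor coefficients of `g`
of total degree `< N` at the origin are prescribed by `P`. -/
def HasForm (f : ℝ × ℝ → ℝ × ℝ) (g : ℝ × ℝ → ℝ) (N : ℕ) (P : ℕ → ℕ → ℝ) : Prop :=
  ContDiff ℝ (⊤ : ℕ∞) g ∧ (∀ p, f p = (p.1, g p)) ∧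
    ∀ i j, i + j < N → tcoeff g i j = P i j

open Asymptotics

/-- Smooth and vanishing to order `n` at the origin. -/
def V {E G : Type} [NormedAddCommGroup E] [NormedSpace ℝ E] [NormedAddCommGroup G]
    [NormedSpace ℝ G] (n : ℕ) (F : E → G) : Prop :=
  ContDiff ℝ (⊤ : ℕ∞) F ∧ ∀ k < n, iteratedFDeriv ℝ k F 0 = 0

section Vanish
variable {E G H : Type} [NormedAddCommGroup E] [NormedSpace ℝ E] [NormedAddCommGroup G]
    [NormedSpace ℝ G] [NormedAddCommGroup H] [NormedSpace ℝ H]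

lemma natle (k : ℕ) : ((k : ℕ∞) : WithTop ℕ∞) ≤ ((⊤ : ℕ∞) : WithTop ℕ∞) := by
  exact_mod_cast le_top

lemma V.mono {m n : ℕ} {F : E → G} (h : V n F) (hmn : m ≤ n) : V m F :=
  ⟨h.1, fun k hk => h.2 k (lt_of_lt_of_le hk hmn)⟩

lemma V.zero_fun (n : ℕ) : V n (fun _ : E => (0 : G)) := by
  refine ⟨contDiff_const, fun k _ => ?_⟩
  have := iteratedFDeriv_fun_zero (𝕜 := ℝ) (E := E) (F := G) (n := k)
  exact congrFun this 0

lemma V.add {n : ℕ} {F F' : E → G} (h : V n F) (h' : V n F') : V n (fun p => F p + F' p) := by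
  refine ⟨h.1.add h'.1, fun k hk => ?_⟩
  have := iteratedFDeriv_add_apply (𝕜 := ℝ) (i := k) (x := (0:E)) (f := F) (g := F')
    (h.1.contDiffAt.of_le (natle k)) (h'.1.contDiffAt.of_le (natle k))
  have e : (fun p => F p + F' p) = F + F' := rfl
  rw [e, this, h.2 k hk, h'.2 k hk, add_zero]

lemma V.neg {n : ℕ} {F : E → G} (h : V n F) : V n (fun p => - F p) := by
  refine ⟨h.1.neg, fun k hk => ?_⟩
  have := iteratedFDeriv_neg_apply (𝕜 := ℝ) (i := k) (x := (0:E)) (f := F)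
  have e : (fun p => - F p) = - F := rfl
  rw [e, this, h.2 k hk, neg_zero]

lemma V.sub {n : ℕ} {F F' : E → G} (h : V n F) (h' : V n F') : V n (fun p => F p - F' p) := by
  have := h.add h'.neg
  simpa [sub_eq_add_neg] using this

lemma V.sum {ι : Type} {n : ℕ} (s : Finset ι) {F : ι → E → G} (h : ∀ i ∈ s, V n (F i)) :
    V n (fun p => ∑ i ∈ s, F i p) := by
  classical
  induction s using Finset.induction_on with
  | empty => simpa using V.zero_fun n
  | insert a s ha ih =>
    simp only [Finset.sum_insert ha]
    exact (h a (Finset.mem_insert_self _ _)).add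
      (ih fun i hi => h i (Finset.mem_insert_of_mem hi))

lemma V.mul {m n : ℕ} {F F' : E → ℝ} (h : V m F) (h' : V n F') :
    V (m + n) (fun p => F p * F' p) := by
  refine ⟨h.1.mul h'.1, fun k hk => ?_⟩
  have := norm_iteratedFDeriv_mul_le (𝕜 := ℝ) h.1 h'.1 (0 : E) (natle k)
  rw [← norm_le_zero_iff]
  refine this.trans (le_of_eq (Finset.sum_eq_zero fun i hi => ?_))
  have hi' : i < k + 1 := Finset.mem_range.1 hi
  rcases lt_or_ge i m with h1 | h1
  · rw [h.2 i h1]; simp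
  · rcases Nat.eq_zero_or_pos n with h2 | h2
    · omega
    · rw [h'.2 (k - i) (by omega)]; simp

lemma V.of_contDiff {F : E → G} (h : ContDiff ℝ (⊤ : ℕ∞) F) : V 0 F := ⟨h, fun k hk => by omega⟩

lemma V.mul_left {n : ℕ} {F F' : E → ℝ} (h : ContDiff ℝ (⊤ : ℕ∞) F) (h' : V n F') :
    V n (fun p => F p * F' p) := by
  simpa using (V.of_contDiff h).mul h'

lemma V.mul_right {n : ℕ} {F F' : E → ℝ} (h' : V n F') (h : ContDiff ℝ (⊤ : ℕ∞) F) :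
    V n (fun p => F' p * F p) := by
  simpa using h'.mul (V.of_contDiff h)

lemma V.pow {n : ℕ} {F : E → ℝ} (h : V n F) (k : ℕ) : V (n * k) (fun p => F p ^ k) := by
  induction k with
  | zero => simpa using V.of_contDiff contDiff_const
  | succ k ih => simpa [pow_succ, Nat.mul_succ] using ih.mul h

lemma V_one {F : E → G} (h : ContDiff ℝ (⊤ : ℕ∞) F) (h0 : F 0 = 0) : V 1 F := by
  refine ⟨h, fun k hk => ?_⟩
  obtain rfl : k = 0 := by omega
  ext m
  simp [h0]

lemma V.zero {n : ℕ} {F : E → G} (h : V n F) (hn : 0 < n) : F 0 = 0 := by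
  have := h.2 0 hn
  have h2 := congrArg (fun L => L 0) this
  simpa using h2

/-- Composition with a linear map on the left. -/
lemma V.clm {n : ℕ} {F : E → G} (h : V n F) (L : G →L[ℝ] H) : V n (fun p => L (F p)) := by
  refine ⟨L.contDiff.comp h.1, fun k hk => ?_⟩
  have := L.iteratedFDeriv_comp_left (f := F) (x := (0:E)) h.1.contDiffAt (natle k)
  have e : (fun p => L (F p)) = L ∘ F := rfl
  rw [e, this, h.2 k hk]
  ext m; simp

lemma V_succ_iff {n : ℕ} {F : E → G} (h : ContDiff ℝ (⊤ : ℕ∞) F) :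
    V (n + 1) F ↔ F 0 = 0 ∧ V n (fderiv ℝ F) := by
  constructor
  · intro hV
    refine ⟨hV.zero (by omega), h.fderiv_right (by simp), fun k hk => ?_⟩
    rw [← norm_eq_zero, norm_iteratedFDeriv_fderiv, hV.2 (k+1) (by omega), norm_zero]
  · rintro ⟨h0, hV⟩
    refine ⟨h, fun k hk => ?_⟩
    rcases k with _ | k
    · ext m; simp [h0]
    · rw [← norm_eq_zero, ← norm_iteratedFDeriv_fderiv, hV.2 k (by omega), norm_zero]

lemma bigO_step {n : ℕ} {F : E → G} (hd : ∀ᶠ p in 𝓝 (0 : E), DifferentiableAt ℝ F p)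
    (h0 : F 0 = 0) (hF : (fderiv ℝ F) =O[𝓝 0] fun p => ‖p‖ ^ n) :
    F =O[𝓝 0] fun p => ‖p‖ ^ (n + 1) := by
  obtain ⟨C, hC, hb⟩ := hF.exists_pos
  rw [IsBigOWith] at hb
  obtain ⟨r, hr, hball⟩ := Metric.eventually_nhds_iff_ball.1 (hd.and hb)
  refine IsBigO.of_bound C ?_
  filter_upwards [Metric.ball_mem_nhds (0 : E) hr] with p hp
  have hseg : ∀ x ∈ segment ℝ (0 : E) p, ‖x‖ ≤ ‖p‖ := by
    intro x hx
    have := (convex_closedBall (0 : E) ‖p‖).segment_subset (by simp) (by simp) hx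
    simpa using this
  have hseg' : ∀ x ∈ segment ℝ (0 : E) p, x ∈ Metric.ball (0 : E) r := fun x hx => by
    have := hseg x hx
    simp only [mem_ball_zero_iff] at hp ⊢
    linarith
  have := Convex.norm_image_sub_le_of_norm_fderiv_le (𝕜 := ℝ) (f := F) (C := C * ‖p‖ ^ n)
    (s := segment ℝ (0 : E) p) (x := 0) (y := p)
    (fun x hx => (hball x (hseg' x hx)).1)
    (fun x hx => by
      refine (hball x (hseg' x hx)).2.trans ?_
      rw [norm_pow, norm_norm]
      have := hseg x hx
      gcongr)
    (convex_segment _ _) (left_mem_segment _ _ _) (right_mem_segment _ _ _)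
  rw [h0, sub_zero, sub_zero] at this
  rw [norm_pow, norm_norm, pow_succ, ← mul_assoc]
  exact this

end Vanish

lemma V.bigO {E : Type} [NormedAddCommGroup E] [NormedSpace ℝ E] (n : ℕ) :
    ∀ {G : Type} [NormedAddCommGroup G] [NormedSpace ℝ G] {F : E → G}, V n F →
      F =O[𝓝 0] fun p => ‖p‖ ^ n := by
  induction n with
  | zero =>
    intro G _ _ F h
    simp only [pow_zero]
    exact (h.1.continuous.tendsto 0).isBigO_one ℝ
  | succ n ih =>
    intro G _ _ F h
    obtain ⟨h0, h1⟩ := (V_succ_iff h.1).1 h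
    exact bigO_step (Eventually.of_forall fun p => (h.1.differentiable (by simp)) p) h0 (ih h1)

/-! ### Taylor expansion in two variables -/

lemma dop_smooth (v : ℝ × ℝ) {F : ℝ × ℝ → ℝ} (h : ContDiff ℝ (⊤ : ℕ∞) F) :
    ContDiff ℝ (⊤ : ℕ∞) (dop v F) := by
  unfold dop
  exact (h.fderiv_right (by simp)).clm_apply contDiff_const

lemma dop_iter_smooth (v : ℝ × ℝ) {F : ℝ × ℝ → ℝ} (h : ContDiff ℝ (⊤ : ℕ∞) F) (i : ℕ) :
    ContDiff ℝ (⊤ : ℕ∞) ((dop v)^[i] F) := by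
  induction i with
  | zero => simpa
  | succ i ih => rw [Function.iterate_succ_apply']; exact dop_smooth v ih

lemma dop_comm (v w : ℝ × ℝ) {F : ℝ × ℝ → ℝ} (h : ContDiff ℝ (⊤ : ℕ∞) F) :
    dop v (dop w F) = dop w (dop v F) := by
  funext p
  have hs : IsSymmSndFDerivAt ℝ F p :=
    (h.contDiffAt (x := p)).isSymmSndFDerivAt (by simp; exact natle 2)
  have hd : DifferentiableAt ℝ (fderiv ℝ F) p :=
    (h.fderiv_right (m := (⊤ : ℕ∞)) (by simp)).differentiable (by simp) p
  have key : ∀ a b : ℝ × ℝ, dop a (dop b F) p = fderiv ℝ (fderiv ℝ F) p a b := by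
    intro a b
    unfold dop
    rw [fderiv_clm_apply hd (differentiableAt_const _)]
    simp
  rw [key, key]
  exact hs v w

lemma dop_iter_comm (v w : ℝ × ℝ) {F : ℝ × ℝ → ℝ} (h : ContDiff ℝ (⊤ : ℕ∞) F) (j : ℕ) :
    (dop w)^[j] (dop v F) = dop v ((dop w)^[j] F) := by
  induction j with
  | zero => rfl
  | succ j ih =>
    rw [Function.iterate_succ_apply', Function.iterate_succ_apply', ih, dop_comm]
    exact dop_iter_smooth w h j

lemma fderiv_eq_pd (F : ℝ × ℝ → ℝ) (p : ℝ × ℝ) :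
    fderiv ℝ F p = pdx F p • ContinuousLinearMap.fst ℝ ℝ ℝ
      + pdy F p • ContinuousLinearMap.snd ℝ ℝ ℝ := by
  ext <;> simp [pdx, pdy, dop]

lemma V_of_pd (n : ℕ) : ∀ {F : ℝ × ℝ → ℝ}, ContDiff ℝ (⊤ : ℕ∞) F →
    (∀ i j, i + j < n → (pdx^[i] (pdy^[j] F)) 0 = 0) → V n F := by
  induction n with
  | zero => intro F h _; exact V.of_contDiff h
  | succ n ih =>
    intro F h hz
    rw [V_succ_iff h]
    refine ⟨hz 0 0 (by omega), ?_⟩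
    have hx : V n (pdx F) := by
      refine ih (dop_smooth _ h) fun i j hij => ?_
      have := hz (i + 1) j (by omega)
      rw [Function.iterate_succ_apply] at this
      unfold pdx pdy at *
      rw [dop_iter_comm _ _ h]
      exact this
    have hy : V n (pdy F) := by
      refine ih (dop_smooth _ h) fun i j hij => ?_
      have := hz i (j + 1) (by omega)
      rwa [Function.iterate_succ_apply] at this
    have e : fderiv ℝ F = fun p => 
        (ContinuousLinearMap.smulRight (1 : ℝ →L[ℝ] ℝ) (ContinuousLinearMap.fst ℝ ℝ ℝ)) (pdx F p)
        + (ContinuousLinearMap.smulRight (1 : ℝ →L[ℝ] ℝ) (ContinuousLinearMap.snd ℝ ℝ ℝ))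
          (pdy F p) := by
      funext p
      rw [fderiv_eq_pd F p]
      simp
    rw [e]
    exact (hx.clm _).add (hy.clm _)

lemma dop_add (v : ℝ × ℝ) {F F' : ℝ × ℝ → ℝ} (h : ContDiff ℝ (⊤ : ℕ∞) F)
    (h' : ContDiff ℝ (⊤ : ℕ∞) F') : dop v (F + F') = dop v F + dop v F' := by
  funext p
  unfold dop
  rw [fderiv_add (h.differentiable (by simp) p) (h'.differentiable (by simp) p)]
  rfl

lemma dop_smul (v : ℝ × ℝ) (c : ℝ) {F : ℝ × ℝ → ℝ} (h : ContDiff ℝ (⊤ : ℕ∞) F) :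
    dop v (c • F) = c • dop v F := by
  funext p
  unfold dop
  rw [fderiv_const_smul (h.differentiable (by simp) p)]
  rfl

lemma dop_iter_add (v : ℝ × ℝ) {F F' : ℝ × ℝ → ℝ} (h : ContDiff ℝ (⊤ : ℕ∞) F)
    (h' : ContDiff ℝ (⊤ : ℕ∞) F') (i : ℕ) :
    (dop v)^[i] (F + F') = (dop v)^[i] F + (dop v)^[i] F' := by
  induction i with
  | zero => rfl
  | succ i ih =>
    simp only [Function.iterate_succ_apply', ih]
    exact dop_add v (dop_iter_smooth v h i) (dop_iter_smooth v h' i)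

lemma dop_iter_smul (v : ℝ × ℝ) (c : ℝ) {F : ℝ × ℝ → ℝ} (h : ContDiff ℝ (⊤ : ℕ∞) F) (i : ℕ) :
    (dop v)^[i] (c • F) = c • (dop v)^[i] F := by
  induction i with
  | zero => rfl
  | succ i ih =>
    simp only [Function.iterate_succ_apply', ih]
    exact dop_smul v c (dop_iter_smooth v h i)

lemma pd_add {F F' : ℝ × ℝ → ℝ} (h : ContDiff ℝ (⊤ : ℕ∞) F)
    (h' : ContDiff ℝ (⊤ : ℕ∞) F') (i j : ℕ) :
    pdx^[i] (pdy^[j] (F + F')) = pdx^[i] (pdy^[j] F) + pdx^[i] (pdy^[j] F') := by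
  unfold pdx pdy
  rw [dop_iter_add _ h h', dop_iter_add _ (dop_iter_smooth _ h j) (dop_iter_smooth _ h' j)]

lemma pd_smul (c : ℝ) {F : ℝ × ℝ → ℝ} (h : ContDiff ℝ (⊤ : ℕ∞) F) (i j : ℕ) :
    pdx^[i] (pdy^[j] (c • F)) = c • pdx^[i] (pdy^[j] F) := by
  unfold pdx pdy
  rw [dop_iter_smul _ _ h, dop_iter_smul _ _ (dop_iter_smooth _ h j)]

/-- The monomial `x^a y^b`. -/
def mono (a b : ℕ) : ℝ × ℝ → ℝ := fun p => p.1 ^ a * p.2 ^ b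

lemma mono_smooth (a b : ℕ) : ContDiff ℝ (⊤ : ℕ∞) (mono a b) := by
  unfold mono; fun_prop

lemma pdy_mono (a b : ℕ) : pdy (mono a b) = (b : ℝ) • mono a (b - 1) := by
  funext p
  have h : HasFDerivAt (mono a b) _ p :=
    ((hasFDerivAt_fst (𝕜 := ℝ) (p := p)).pow a).mul ((hasFDerivAt_snd (𝕜 := ℝ) (p := p)).pow b)
  unfold pdy dop
  rw [h.fderiv]
  simp [mono]
  ring

lemma pdx_mono (a b : ℕ) : pdx (mono a b) = (a : ℝ) • mono (a - 1) b := by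
  funext p
  have h : HasFDerivAt (mono a b) _ p :=
    ((hasFDerivAt_fst (𝕜 := ℝ) (p := p)).pow a).mul ((hasFDerivAt_snd (𝕜 := ℝ) (p := p)).pow b)
  unfold pdx dop
  rw [h.fderiv]
  simp [mono]
  ring

lemma pdy_iter_mono (a b j : ℕ) :
    pdy^[j] (mono a b) = (b.descFactorial j : ℝ) • mono a (b - j) := by
  induction j with
  | zero => simp
  | succ j ih =>
    rw [Function.iterate_succ_apply', ih]
    have := dop_smul (0, 1) (b.descFactorial j : ℝ) (mono_smooth a (b - j))
    unfold pdy at *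
    rw [this]
    have h2 := pdy_mono a (b - j)
    unfold pdy at h2
    rw [h2, smul_smul, Nat.descFactorial_succ, Nat.sub_sub]
    push_cast
    ring_nf

lemma pdx_iter_mono (a b j : ℕ) :
    pdx^[j] (mono a b) = (a.descFactorial j : ℝ) • mono (a - j) b := by
  induction j with
  | zero => simp
  | succ j ih =>
    rw [Function.iterate_succ_apply', ih]
    have := dop_smul (1, 0) (a.descFactorial j : ℝ) (mono_smooth (a - j) b)
    unfold pdx at *
    rw [this]
    have h2 := pdx_mono (a - j) b
    unfold pdx at h2
    rw [h2, smul_smul, Nat.descFactorial_succ, Nat.sub_sub]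
    push_cast
    ring_nf

lemma pd_mono_zero (a b i j : ℕ) :
    (pdx^[i] (pdy^[j] (mono a b))) 0 =
      if i = a ∧ j = b then (Nat.factorial i * Nat.factorial j : ℝ) else 0 := by
  rw [pdy_iter_mono]
  have := dop_iter_smul (1, 0) (b.descFactorial j : ℝ) (mono_smooth a (b - j)) i
  have e : pdx = dop (1, 0) := rfl
  rw [e, this, ← e, pdx_iter_mono]
  simp only [Pi.smul_apply, mono, smul_eq_mul, Prod.fst_zero, Prod.snd_zero]
  split_ifs with h
  · obtain ⟨rfl, rfl⟩ := h
    simp [Nat.descFactorial_self]; ring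
  · rcases lt_trichotomy i a with h1 | h1 | h1
    · simp [zero_pow (Nat.sub_ne_zero_of_lt h1)]
    · rcases lt_trichotomy j b with h2 | h2 | h2
      · simp [zero_pow (Nat.sub_ne_zero_of_lt h2)]
      · exact absurd ⟨h1, h2⟩ h
      · simp [Nat.descFactorial_of_lt h2]
    · simp [Nat.descFactorial_of_lt h1]

lemma pd_sum {ι : Type} (s : Finset ι) (c : ι → ℝ) (F : ι → ℝ × ℝ → ℝ)
    (h : ∀ k, ContDiff ℝ (⊤ : ℕ∞) (F k)) (i j : ℕ) :
    (pdx^[i] (pdy^[j] (∑ k ∈ s, c k • F k))) 0 = ∑ k ∈ s, c k * (pdx^[i] (pdy^[j] (F k))) 0 := by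
  classical
  induction s using Finset.induction_on with
  | empty =>
    have := pd_smul 0 (h := (contDiff_const : ContDiff ℝ (⊤ : ℕ∞) (fun _ : ℝ × ℝ => (0:ℝ)))) i j
    rw [zero_smul, zero_smul] at this
    simp [this]
  | insert a s ha ih =>
    rw [Finset.sum_insert ha, Finset.sum_insert ha, pd_add, pd_smul _ (h a)]
    · simp [ih]
    · exact (h a).const_smul (c a)
    · have e : (∑ k ∈ s, c k • F k) = fun p => ∑ k ∈ s, (c k • F k) p := by
        funext p; simp
      rw [e]
      exact ContDiff.sum fun k _ => (h k).const_smul (c k)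

lemma taylor (n : ℕ) {F : ℝ × ℝ → ℝ} (h : ContDiff ℝ (⊤ : ℕ∞) F) :
    V n (fun p => F p - ∑ i ∈ Finset.range n, ∑ j ∈ Finset.range n,
      tcoeff F i j * (p.1 ^ i * p.2 ^ j)) := by
  set s := Finset.range n ×ˢ Finset.range n
  set T : ℝ × ℝ → ℝ := ∑ k ∈ s, tcoeff F k.1 k.2 • mono k.1 k.2 with hT
  have e : (fun p : ℝ × ℝ => F p - ∑ i ∈ Finset.range n, ∑ j ∈ Finset.range n,
      tcoeff F i j * (p.1 ^ i * p.2 ^ j)) = F + (-1 : ℝ) • T := by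
    funext p
    simp [hT, s, Finset.sum_product, mono, sub_eq_add_neg]
  have hTs : ContDiff ℝ (⊤ : ℕ∞) T := by
    have e : T = fun p => ∑ k ∈ s, (tcoeff F k.1 k.2 • mono k.1 k.2) p := by
      funext p; simp [hT]
    rw [e]
    exact ContDiff.sum fun k _ => (mono_smooth k.1 k.2).const_smul (tcoeff F k.1 k.2)
  rw [e]
  refine V_of_pd n (h.add (hTs.const_smul (-1 : ℝ))) fun i j hij => ?_
  rw [pd_add h (F' := (-1 : ℝ) • T) (hTs.const_smul (-1 : ℝ)), pd_smul _ hTs]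
  have := pd_sum s (fun k => tcoeff F k.1 k.2) (fun k => mono k.1 k.2)
    (fun k => mono_smooth _ _) i j
  simp only [Pi.add_apply, Pi.smul_apply, hT]
  rw [this, Finset.sum_eq_single (i, j)]
  · simp only [pd_mono_zero]
    have : (Nat.factorial i * Nat.factorial j : ℝ) ≠ 0 := by positivity
    simp [tcoeff]
    field_simp
    ring
  · rintro ⟨a, b⟩ _ hab
    rw [pd_mono_zero, if_neg, mul_zero]
    rintro ⟨rfl, rfl⟩
    exact hab rfl
  · intro hn
    simp [s] at hn
    omega

lemma V_fst : V 1 (fun p : ℝ × ℝ => p.1) := V_one (by fun_prop) rfl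
lemma V_snd : V 1 (fun p : ℝ × ℝ => p.2) := V_one (by fun_prop) rfl

lemma V_mono (i j : ℕ) : V (i + j) (fun p : ℝ × ℝ => p.1 ^ i * p.2 ^ j) := by
  simpa using (V_fst.pow i).mul (V_snd.pow j)

lemma V_pow_shift {S : ℝ × ℝ → ℝ} (hS : V 7 S) (j : ℕ) :
    V (j + 6) (fun p => (p.2 - S p) ^ j - p.2 ^ j) := by
  induction j with
  | zero => simpa using V.zero_fun 6
  | succ j ih =>
    have h1 : V 1 (fun p => p.2 - S p) := V_snd.sub (hS.mono (by omega))
    have h2 := (h1.mul ih).sub ((hS.mul (V_snd.pow j)).mono (m := 1 + (j + 6)) (by omega))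
    have e : (fun p : ℝ × ℝ => (p.2 - S p) ^ (j + 1) - p.2 ^ (j + 1)) =
      fun p => (p.2 - S p) * ((p.2 - S p) ^ j - p.2 ^ j) - S p * p.2 ^ j := by
      funext p; ring
    rw [e]
    exact h2.mono (by omega)

lemma decomp {g : ℝ × ℝ → ℝ} (hg : ContDiff ℝ (⊤ : ℕ∞) g)
    (hc : ∀ i j, i + j < 8 → tcoeff g i j = if (i, j) = (1, 1) ∨ (i, j) = (0, 7) then 1 else 0) :
    ∃ R E : ℝ × ℝ → ℝ, V 7 R ∧ V 12 E ∧
      (∀ S, V 7 S → V 12 (fun p => R (p.1, p.2 - S p) - R p)) ∧ ∀ p : ℝ × ℝ, g p = p.1 * p.2 +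
      (p.2 ^ 7 + tcoeff g 0 8 * p.2 ^ 8 + tcoeff g 0 9 * p.2 ^ 9 + tcoeff g 0 10 * p.2 ^ 10
        + tcoeff g 0 11 * p.2 ^ 11) + p.1 * R p + E p := by
  refine ⟨fun p => ∑ i ∈ Finset.range 11, ∑ j ∈ Finset.range 12,
    (tcoeff g (i + 1) j - if (i, j) = (0, 1) then 1 else 0) * (p.1 ^ i * p.2 ^ j), _, ?_,
    taylor 12 hg, fun S hS => ?_, fun p => ?_⟩
  · refine V.sum _ fun i _ => V.sum _ fun j _ => ?_
    by_cases hij : i + j < 7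
    · have : (tcoeff g (i + 1) j - if (i, j) = (0, 1) then 1 else 0) = 0 := by
        rw [hc (i + 1) j (by omega)]
        simp
      simp only [this, zero_mul]
      exact V.zero_fun 7
    · exact V.mul_left contDiff_const ((V_mono i j).mono (by omega))
  · simp only [← Finset.sum_sub_distrib]
    refine V.sum _ fun i _ => V.sum _ fun j _ => ?_
    by_cases hij : i + j < 7
    · have : (tcoeff g (i + 1) j - if (i, j) = (0, 1) then 1 else 0) = 0 := by
        rw [hc (i + 1) j (by omega)]
        simp
      simp only [this, zero_mul, sub_self]
      exact V.zero_fun 12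
    · simp only [← mul_sub]
      refine V.mul_left contDiff_const ?_
      exact ((V_fst.pow i).mul (V_pow_shift hS j)).mono (by omega)
  · rw [Finset.sum_range_succ' _ 11]
    have h0 : ∑ j ∈ Finset.range 12, tcoeff g 0 j * (p.1 ^ 0 * p.2 ^ j) =
      p.2 ^ 7 + tcoeff g 0 8 * p.2 ^ 8 + tcoeff g 0 9 * p.2 ^ 9 + tcoeff g 0 10 * p.2 ^ 10
        + tcoeff g 0 11 * p.2 ^ 11 := by
      simp [Finset.sum_range_succ, hc 0 0, hc 0 1, hc 0 2, hc 0 3, hc 0 4, hc 0 5, hc 0 6, hc 0 7]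
    have h1 : p.1 * ∑ i ∈ Finset.range 11, ∑ j ∈ Finset.range 12,
        (tcoeff g (i + 1) j - if (i, j) = (0, 1) then 1 else 0) * (p.1 ^ i * p.2 ^ j) =
        ∑ i ∈ Finset.range 11, ∑ j ∈ Finset.range 12,
          tcoeff g (i + 1) j * (p.1 ^ (i + 1) * p.2 ^ j) - p.1 * p.2 := by
      have h2 : ∑ i ∈ Finset.range 11, ∑ j ∈ Finset.range 12,
          (if (i, j) = (0, 1) then (1:ℝ) else 0) * (p.1 ^ i * p.2 ^ j) = p.2 := by
        rw [Finset.sum_eq_single 0, Finset.sum_eq_single 1]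
        · simp
        · intro b _ hb; simp [hb]
        · simp
        · intro b _ hb; simp [hb]
        · simp
      simp only [sub_mul, Finset.sum_sub_distrib]
      rw [h2, mul_sub]
      congr 1
      simp only [Finset.mul_sum]
      refine Finset.sum_congr rfl fun i _ => Finset.sum_congr rfl fun j _ => ?_
      ring
    rw [h0, h1]
    ring

/-! ### Jets -/

lemma V.comp {n : ℕ} {F : ℝ × ℝ → ℝ} {φ : ℝ × ℝ → ℝ × ℝ} (h : V n F)
    (hφ : ContDiff ℝ (⊤ : ℕ∞) φ) (h0 : φ 0 = 0) : V n (fun p => F (φ p)) := by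
  refine ⟨h.1.comp hφ, fun k hk => ?_⟩
  have := norm_iteratedFDeriv_comp_le (𝕜 := ℝ) (g := F) (f := φ) (n := k) h.1 hφ (natle k) 0
    (C := 0) (D := 1 + ∑ i ∈ Finset.range (k + 1), ‖iteratedFDeriv ℝ i φ 0‖)
    (fun i hi => by rw [h0, h.2 i (by omega), norm_zero])
    (fun i hi hik => by
      have h1 : ‖iteratedFDeriv ℝ i φ 0‖ ≤
          ∑ i ∈ Finset.range (k + 1), ‖iteratedFDeriv ℝ i φ 0‖ :=
        Finset.single_le_sum (f := fun i => ‖iteratedFDeriv ℝ i φ 0‖)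
          (fun _ _ => norm_nonneg _) (Finset.mem_range.2 (by omega))
      have h2 : (0 : ℝ) ≤ ∑ i ∈ Finset.range (k + 1), ‖iteratedFDeriv ℝ i φ 0‖ :=
        Finset.sum_nonneg fun _ _ => norm_nonneg _
      refine le_trans (by linarith) (le_self_pow₀ (a := 1 + ∑ i ∈ Finset.range (k + 1), ‖iteratedFDeriv ℝ i φ 0‖) (by linarith) (n := i) (by omega)))
  have h3 : ‖iteratedFDeriv ℝ k (F ∘ φ) 0‖ ≤ 0 := by simpa using this
  exact norm_le_zero_iff.1 h3

lemma V_pair {n : ℕ} {F H : ℝ × ℝ → ℝ × ℝ}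
    (h1 : V n (fun p => (F p).1 - (H p).1)) (h2 : V n (fun p => (F p).2 - (H p).2)) :
    V n (fun p => F p - H p) := by
  have := (h1.clm (ContinuousLinearMap.inl ℝ ℝ ℝ)).add (h2.clm (ContinuousLinearMap.inr ℝ ℝ ℝ))
  have e : (fun p => F p - H p) = fun p => ContinuousLinearMap.inl ℝ ℝ ℝ ((F p).1 - (H p).1)
    + ContinuousLinearMap.inr ℝ ℝ ℝ ((F p).2 - (H p).2) := by
    funext p; ext <;> simp
  rw [e]; exact this

lemma jet_iff_V {n : ℕ} {F H : ℝ × ℝ → ℝ × ℝ} (hF : ContDiff ℝ (⊤ : ℕ∞) F)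
    (hH : ContDiff ℝ (⊤ : ℕ∞) H) :
    V (n + 1) (fun p => F p - H p) ↔
      ∀ i ≤ n, iteratedFDeriv ℝ i F 0 = iteratedFDeriv ℝ i H 0 := by
  have key : ∀ i : ℕ, iteratedFDeriv ℝ i (fun p => F p - H p) 0
      = iteratedFDeriv ℝ i F 0 - iteratedFDeriv ℝ i H 0 := by
    intro i
    have e : (fun p => F p - H p) = F + (-H) := by funext p; simp [sub_eq_add_neg]
    rw [e, iteratedFDeriv_add_apply (g := -H) (hF.contDiffAt.of_le (natle i))
      (hH.neg.contDiffAt.of_le (natle i)), iteratedFDeriv_neg_apply, sub_eq_add_neg]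
  constructor
  · intro h i hi
    have := h.2 i (by omega)
    rw [key, sub_eq_zero] at this
    exact this
  · intro h
    refine ⟨hF.sub hH, fun k hk => ?_⟩
    rw [key, h k (by omega), sub_self]

lemma taylorComp_congr {E G H : Type} [NormedAddCommGroup E] [NormedSpace ℝ E]
    [NormedAddCommGroup G] [NormedSpace ℝ G] [NormedAddCommGroup H] [NormedSpace ℝ H]
    (q q' : FormalMultilinearSeries ℝ G H) (p p' : FormalMultilinearSeries ℝ E G) (n : ℕ)
    (hq : ∀ i ≤ n, q i = q' i) (hp : ∀ i ≤ n, p i = p' i) :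
    q.taylorComp p n = q'.taylorComp p' n := by
  unfold FormalMultilinearSeries.taylorComp
  refine Finset.sum_congr rfl fun c _ => ?_
  unfold FormalMultilinearSeries.compAlongOrderedFinpartition
  rw [hq _ c.length_le]
  congr 1
  funext m
  exact hp _ (c.partSize_le m)

lemma jet_comp {E G H : Type} [NormedAddCommGroup E] [NormedSpace ℝ E]
    [NormedAddCommGroup G] [NormedSpace ℝ G] [NormedAddCommGroup H] [NormedSpace ℝ H] {n : ℕ}
    {F F' : E → G} {K K' : G → H}
    (hF : ContDiff ℝ (⊤ : ℕ∞) F) (hF' : ContDiff ℝ (⊤ : ℕ∞) F')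
    (hK : ContDiff ℝ (⊤ : ℕ∞) K) (hK' : ContDiff ℝ (⊤ : ℕ∞) K') (h0 : F 0 = 0) (h0' : F' 0 = 0)
    (h : ∀ i ≤ n, iteratedFDeriv ℝ i F 0 = iteratedFDeriv ℝ i F' 0)
    (h' : ∀ i ≤ n, iteratedFDeriv ℝ i K 0 = iteratedFDeriv ℝ i K' 0) :
    ∀ i ≤ n, iteratedFDeriv ℝ i (K ∘ F) 0 = iteratedFDeriv ℝ i (K' ∘ F') 0 := by
  intro i hi
  rw [iteratedFDeriv_comp hK.contDiffAt hF.contDiffAt (natle i),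
    iteratedFDeriv_comp hK'.contDiffAt hF'.contDiffAt (natle i)]
  refine taylorComp_congr _ _ _ _ i ?_ ?_
  · intro k hk
    simp only [ftaylorSeries, h0, h0']
    exact h' k (by omega)
  · intro k hk
    exact h k (by omega)

lemma JetEquiv.trans {r : ℕ} {f g h : ℝ × ℝ → ℝ × ℝ} (hf : ContDiff ℝ (⊤ : ℕ∞) f)
    (hg : ContDiff ℝ (⊤ : ℕ∞) g) (f0 : f 0 = 0) (g0 : g 0 = 0)
    (h1 : JetEquiv r f g) (h2 : JetEquiv r g h) : JetEquiv r f h := by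
  obtain ⟨φ, ψ, hφ, hψ, φ0, ψ0, bφ, bψ, e⟩ := h1
  obtain ⟨φ', ψ', hφ', hψ', φ0', ψ0', bφ', bψ', e'⟩ := h2
  refine ⟨φ ∘ φ', ψ' ∘ ψ, hφ.comp hφ', hψ'.comp hψ, by simp [φ0, φ0'], by simp [ψ0, ψ0'],
    ?_, ?_, ?_⟩
  · rw [fderiv_comp _ (hφ.differentiable (by simp) _) (hφ'.differentiable (by simp) _), φ0']
    exact bφ.comp bφ'
  · rw [fderiv_comp _ (hψ'.differentiable (by simp) _) (hψ.differentiable (by simp) _), ψ0]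
    exact bψ'.comp bψ
  · intro i hi
    rw [← e' i hi]
    have s1 : ContDiff ℝ (⊤ : ℕ∞) (ψ ∘ f ∘ φ) := hψ.comp (hf.comp hφ)
    have a := jet_comp (n := r) hφ' hφ' s1 hg φ0' φ0' (fun _ _ => rfl) e
    have b := jet_comp (n := r) (s1.comp hφ') (hg.comp hφ') hψ' hψ'
      (by simp [φ0', φ0, f0, ψ0]) (by simp [φ0', g0]) a (fun _ _ => rfl) i hi
    exact b

lemma bij_of_id {F : ℝ × ℝ → ℝ × ℝ} (hF : ContDiff ℝ (⊤ : ℕ∞) F)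
    (h1 : V 2 (fun p => (F p).1 - p.1)) (h2 : V 2 (fun p => (F p).2 - p.2)) :
    Function.Bijective (⇑(fderiv ℝ F 0)) := by
  have h := V_pair (F := F) (H := id) h1 h2
  have h3 := ((V_succ_iff h.1).1 h).2.zero (by omega)
  have h4 : fderiv ℝ F 0 - fderiv ℝ id 0 = 0 := by
    rw [← fderiv_sub (hF.differentiable (by simp) _) differentiableAt_id]
    exact h3
  rw [sub_eq_zero, fderiv_id] at h4
  rw [h4]
  exact Function.bijective_id

/-- An upper triangular linear map. -/
def tri (a b c : ℝ) : ℝ × ℝ →L[ℝ] ℝ × ℝ :=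
  (a • ContinuousLinearMap.fst ℝ ℝ ℝ + c • ContinuousLinearMap.snd ℝ ℝ ℝ).prod
    (b • ContinuousLinearMap.snd ℝ ℝ ℝ)

lemma tri_apply (a b c : ℝ) (p : ℝ × ℝ) : tri a b c p = (a * p.1 + c * p.2, b * p.2) := by
  simp [tri]

lemma tri_bij {a b : ℝ} (c : ℝ) (ha : a ≠ 0) (hb : b ≠ 0) :
    Function.Bijective (⇑(fderiv ℝ (tri a b c) 0)) := by
  rw [ContinuousLinearMap.fderiv]
  constructor
  · rintro ⟨x, y⟩ ⟨x', y'⟩ h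
    simp only [tri_apply, Prod.mk.injEq] at h
    obtain ⟨h1, h2⟩ := h
    have hy : y = y' := mul_left_cancel₀ hb h2
    subst hy
    have hx : x = x' := mul_left_cancel₀ ha (by linarith)
    rw [hx]
  · rintro ⟨x, y⟩
    refine ⟨((x - c * (y / b)) / a, y / b), ?_⟩
    rw [tri_apply]
    simp only [Prod.mk.injEq]
    constructor <;> field_simp
    ring

/-! ### The direct implication -/

/-- Reduction to a function of the form `xy + k(y)`. -/
lemma step1 {f : ℝ × ℝ → ℝ × ℝ} {g : ℝ × ℝ → ℝ} (hg : ContDiff ℝ (⊤ : ℕ∞) g)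
    (hf : ∀ p, f p = (p.1, g p))
    (hc : ∀ i j, i + j < 8 → tcoeff g i j = if (i, j) = (1, 1) ∨ (i, j) = (0, 7) then 1 else 0) :
    JetEquiv 11 f (fun p => (p.1, p.1 * p.2 + (p.2 ^ 7 + tcoeff g 0 8 * p.2 ^ 8
      + tcoeff g 0 9 * p.2 ^ 9 + tcoeff g 0 10 * p.2 ^ 10 + tcoeff g 0 11 * p.2 ^ 11))) := by
  obtain ⟨R, E, hR, hE, hRS, hdec⟩ := decomp hg hc
  generalize tcoeff g 0 8 = a8 at *
  generalize tcoeff g 0 9 = a9 at *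
  generalize tcoeff g 0 10 = a10 at *
  generalize tcoeff g 0 11 = a11 at *
  have hRs := hR.1
  have hφ : ContDiff ℝ (⊤ : ℕ∞) (fun p : ℝ × ℝ => (p.1, p.2 - R p)) := by fun_prop
  have hφ0 : (fun p : ℝ × ℝ => (p.1, p.2 - R p)) 0 = 0 := by
    simp [hR.zero (by omega)]
  have hfs : ContDiff ℝ (⊤ : ℕ∞) f := by
    have : f = fun p => (p.1, g p) := funext hf
    rw [this]; fun_prop
  refine ⟨fun p => (p.1, p.2 - R p), id, hφ, contDiff_id, hφ0, rfl, ?_, ?_, ?_⟩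
  · refine bij_of_id hφ (by simpa using V.zero_fun 2) ?_
    have := hR.neg.mono (m := 2) (by omega)
    simpa using this
  · rw [fderiv_id]; exact Function.bijective_id
  · rw [← jet_iff_V (contDiff_id.comp (hfs.comp hφ)) (by fun_prop)]
    refine V_pair ?_ ?_
    · simpa [hf] using V.zero_fun 12
    · have k7 := (V_pow_shift hR 7).mono (m := 12) (by omega)
      have k8 := V.mul_left (F := fun _ => a8) contDiff_const
        ((V_pow_shift hR 8).mono (m := 12) (by omega))
      have k9 := V.mul_left (F := fun _ => a9) contDiff_const
        ((V_pow_shift hR 9).mono (m := 12) (by omega))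
      have k10 := V.mul_left (F := fun _ => a10) contDiff_const
        ((V_pow_shift hR 10).mono (m := 12) (by omega))
      have k11 := V.mul_left (F := fun _ => a11) contDiff_const
        ((V_pow_shift hR 11).mono (m := 12) (by omega))
      have kR := V.mul_left (F := fun p : ℝ × ℝ => p.1) (by fun_prop) (hRS R hR)
      have kE := hE.comp hφ hφ0
      have := (((((k7.add k8).add k9).add k10).add k11).add kR).add kE
      convert this using 2 with p
      simp only [Function.comp, id, hf, hdec]
      ring

/-- `q = 1 + cy + ... + c^10 y^10`. -/
def qq (c : ℝ) (y : ℝ) : ℝ := 1 + c * y + c ^ 2 * y ^ 2 + c ^ 3 * y ^ 3 + c ^ 4 * y ^ 4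
  + c ^ 5 * y ^ 5 + c ^ 6 * y ^ 6 + c ^ 7 * y ^ 7 + c ^ 8 * y ^ 8 + c ^ 9 * y ^ 9 + c ^ 10 * y ^ 10

lemma qq_mul (c y : ℝ) : (1 - c * y) * qq c y = 1 - c ^ 11 * y ^ 11 := by
  unfold qq; ring

lemma qq_smooth (c : ℝ) : ContDiff ℝ (⊤ : ℕ∞) (fun p : ℝ × ℝ => qq c p.2) := by
  unfold qq; fun_prop

lemma qq_pow_step (c : ℝ) (m : ℕ) (b1 b2 b3 b4 d1 d2 d3 d4 : ℝ)
    (h : V 5 (fun p : ℝ × ℝ => qq c p.2 ^ m -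
      (1 + b1 * c * p.2 + b2 * c ^ 2 * p.2 ^ 2 + b3 * c ^ 3 * p.2 ^ 3 + b4 * c ^ 4 * p.2 ^ 4)))
    (h1 : d1 = 1 + b1) (h2 : d2 = d1 + b2) (h3 : d3 = d2 + b3) (h4 : d4 = d3 + b4) :
    V 5 (fun p : ℝ × ℝ => qq c p.2 ^ (m + 1) -
      (1 + d1 * c * p.2 + d2 * c ^ 2 * p.2 ^ 2 + d3 * c ^ 3 * p.2 ^ 3 + d4 * c ^ 4 * p.2 ^ 4)) := by
  subst h1 h2 h3 h4
  have A := V.mul_left (qq_smooth c) h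
  have B := V.mul_right (V_snd.pow 5)
    (F := fun p : ℝ × ℝ => (1 + b1 * c * p.2 + b2 * c ^ 2 * p.2 ^ 2 + b3 * c ^ 3 * p.2 ^ 3
      + b4 * c ^ 4 * p.2 ^ 4) * (c ^ 5 + c ^ 6 * p.2 + c ^ 7 * p.2 ^ 2 + c ^ 8 * p.2 ^ 3
      + c ^ 9 * p.2 ^ 4 + c ^ 10 * p.2 ^ 5)
      + (b1 + b2 + b3 + b4) * c ^ 5 + (b2 + b3 + b4) * c ^ 6 * p.2 + (b3 + b4) * c ^ 7 * p.2 ^ 2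
      + b4 * c ^ 8 * p.2 ^ 3) (by fun_prop)
  convert A.add B using 2 with p
  unfold qq
  ring

lemma qq_pows (c : ℝ) :
    V 5 (fun p : ℝ × ℝ => qq c p.2 ^ 6 -
      (1 + 6 * c * p.2 + 21 * c ^ 2 * p.2 ^ 2 + 56 * c ^ 3 * p.2 ^ 3 + 126 * c ^ 4 * p.2 ^ 4)) ∧
    V 5 (fun p : ℝ × ℝ => qq c p.2 ^ 7 -
      (1 + 7 * c * p.2 + 28 * c ^ 2 * p.2 ^ 2 + 84 * c ^ 3 * p.2 ^ 3 + 210 * c ^ 4 * p.2 ^ 4)) ∧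
    V 5 (fun p : ℝ × ℝ => qq c p.2 ^ 8 -
      (1 + 8 * c * p.2 + 36 * c ^ 2 * p.2 ^ 2 + 120 * c ^ 3 * p.2 ^ 3 + 330 * c ^ 4 * p.2 ^ 4)) ∧
    V 5 (fun p : ℝ × ℝ => qq c p.2 ^ 9 -
      (1 + 9 * c * p.2 + 45 * c ^ 2 * p.2 ^ 2 + 165 * c ^ 3 * p.2 ^ 3 + 495 * c ^ 4 * p.2 ^ 4)) ∧
    V 5 (fun p : ℝ × ℝ => qq c p.2 ^ 10 -
      (1 + 10 * c * p.2 + 55 * c ^ 2 * p.2 ^ 2 + 220 * c ^ 3 * p.2 ^ 3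
        + 715 * c ^ 4 * p.2 ^ 4)) := by
  have h0 : V 5 (fun p : ℝ × ℝ => qq c p.2 ^ 0 -
      (1 + 0 * c * p.2 + 0 * c ^ 2 * p.2 ^ 2 + 0 * c ^ 3 * p.2 ^ 3 + 0 * c ^ 4 * p.2 ^ 4)) := by
    simpa using V.zero_fun 5
  have h1 := qq_pow_step c 0 0 0 0 0 1 1 1 1 h0 (by norm_num) (by norm_num) (by norm_num)
    (by norm_num)
  have h2 := qq_pow_step c 1 _ _ _ _ 2 3 4 5 h1 (by norm_num) (by norm_num) (by norm_num)
    (by norm_num)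
  have h3 := qq_pow_step c 2 _ _ _ _ 3 6 10 15 h2 (by norm_num) (by norm_num) (by norm_num)
    (by norm_num)
  have h4 := qq_pow_step c 3 _ _ _ _ 4 10 20 35 h3 (by norm_num) (by norm_num) (by norm_num)
    (by norm_num)
  have h5 := qq_pow_step c 4 _ _ _ _ 5 15 35 70 h4 (by norm_num) (by norm_num) (by norm_num)
    (by norm_num)
  have h6 := qq_pow_step c 5 _ _ _ _ 6 21 56 126 h5 (by norm_num) (by norm_num) (by norm_num)
    (by norm_num)
  have h7 := qq_pow_step c 6 _ _ _ _ 7 28 84 210 h6 (by norm_num) (by norm_num) (by norm_num)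
    (by norm_num)
  have h8 := qq_pow_step c 7 _ _ _ _ 8 36 120 330 h7 (by norm_num) (by norm_num) (by norm_num)
    (by norm_num)
  have h9 := qq_pow_step c 8 _ _ _ _ 9 45 165 495 h8 (by norm_num) (by norm_num) (by norm_num)
    (by norm_num)
  have h10 := qq_pow_step c 9 _ _ _ _ 10 55 220 715 h9 (by norm_num) (by norm_num) (by norm_num)
    (by norm_num)
  exact ⟨h6, h7, h8, h9, h10⟩

/-- Elimination of `y^8`. -/
lemma step2 (c a9 a10 a11 : ℝ) : JetEquiv 11
    (fun p => (p.1, p.1 * p.2 + (p.2 ^ 7 + (-6 * c) * p.2 ^ 8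
      + a9 * p.2 ^ 9 + a10 * p.2 ^ 10 + a11 * p.2 ^ 11)))
    (fun p => (p.1, p.1 * p.2 + p.2 ^ 7 + (a9 - 21 * c ^ 2) * p.2 ^ 9
      + (8 * c * a9 + a10 - 112 * c ^ 3) * p.2 ^ 10
      + (36 * c ^ 2 * a9 + 9 * c * a10 + a11 - 378 * c ^ 4) * p.2 ^ 11)) := by
  obtain ⟨h6, h7, h8, h9, h10⟩ := qq_pows c
  have hqs := qq_smooth c
  set K : ℝ → ℝ := fun Y => Y ^ 7 + (-6 * c) * Y ^ 8 + a9 * Y ^ 9 + a10 * Y ^ 10 + a11 * Y ^ 11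
    with hK
  have hKs : ContDiff ℝ (⊤ : ℕ∞) (fun p : ℝ × ℝ => K (p.2 * qq c p.2)) := by
    simp only [hK]; fun_prop
  set φ : ℝ × ℝ → ℝ × ℝ := fun p =>
    ((p.1 - c * K (p.2 * qq c p.2)) * (1 - c * p.2), p.2 * qq c p.2) with hφdef
  have hφ : ContDiff ℝ (⊤ : ℕ∞) φ := by simp only [hφdef]; fun_prop
  have hφ0 : φ 0 = 0 := by simp [hφdef, hK]
  refine ⟨φ, tri 1 1 c, hφ, (tri 1 1 c).contDiff, hφ0, map_zero _, ?_,
    tri_bij c one_ne_zero one_ne_zero, ?_⟩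
  · have hK2 : V 2 (fun p : ℝ × ℝ => K (p.2 * qq c p.2)) := by
      have := V.mul_right (V_snd.pow 2) (F := fun p : ℝ × ℝ => p.2 ^ 5 * qq c p.2 ^ 7 *
        (1 + (-6 * c) * (p.2 * qq c p.2) + a9 * (p.2 * qq c p.2) ^ 2
          + a10 * (p.2 * qq c p.2) ^ 3 + a11 * (p.2 * qq c p.2) ^ 4)) (by fun_prop)
      convert this using 2 with p
      simp only [hK]
      ring
    refine bij_of_id hφ ?_ ?_
    · have A := V.mul_right hK2 (F := fun p : ℝ × ℝ => -c * (1 - c * p.2)) (by fun_prop)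
      have B := V.mul_right (V_fst.mul V_snd) (F := fun p : ℝ × ℝ => -c) (by fun_prop)
      convert A.add B using 2 with p
      simp only [hφdef]
      ring
    · have B := V.mul_right (V_snd.pow 2) (F := fun p : ℝ × ℝ => c + c ^ 2 * p.2 +
        c ^ 3 * p.2 ^ 2 + c ^ 4 * p.2 ^ 3 + c ^ 5 * p.2 ^ 4 + c ^ 6 * p.2 ^ 5 + c ^ 7 * p.2 ^ 6
        + c ^ 8 * p.2 ^ 7 + c ^ 9 * p.2 ^ 8 + c ^ 10 * p.2 ^ 9) (by fun_prop)
      convert B using 2 with p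
      simp only [hφdef, qq]
      ring
  · rw [← jet_iff_V ((tri 1 1 c).contDiff.comp (ContDiff.comp (by fun_prop) hφ)) (by fun_prop)]
    refine V_pair ?_ ?_
    · have := V.mul_right (V_snd.pow 12) (F := fun p : ℝ × ℝ =>
        -c ^ 12 * (p.1 - c * K (p.2 * qq c p.2))) (by fun_prop)
      convert this using 2 with p
      have hq := qq_mul c p.2
      simp only [Function.comp, tri_apply, hφdef]
      have e : ∀ Y : ℝ, Y ^ 7 + (-6 * c) * Y ^ 8 + a9 * Y ^ 9 + a10 * Y ^ 10 + a11 * Y ^ 11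
        = K Y := fun _ => rfl
      simp only [e]
      generalize K (p.2 * qq c p.2) = k
      linear_combination (c * (p.1 - c * k) * p.2) * hq
    · have k7 := V.mul_right (V_snd.mul h7) (F := fun _ => -6 * c) (by fun_prop)
      have k8 := V.mul_right ((V_snd.pow 2).mul h8) (F := fun _ => a9) (by fun_prop)
      have k9 := V.mul_right ((V_snd.pow 3).mul h9) (F := fun _ => a10) (by fun_prop)
      have k10 := V.mul_right ((V_snd.pow 4).mul h10) (F := fun _ => a11) (by fun_prop)
      have kP := V.mul_right (V_snd.pow 5) (F := fun p : ℝ × ℝ =>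
        (-6 * c) * 210 * c ^ 4 + a9 * (120 * c ^ 3 + 330 * c ^ 4 * p.2)
        + a10 * (45 * c ^ 2 + 165 * c ^ 3 * p.2 + 495 * c ^ 4 * p.2 ^ 2)
        + a11 * (10 * c + 55 * c ^ 2 * p.2 + 220 * c ^ 3 * p.2 ^ 2 + 715 * c ^ 4 * p.2 ^ 3))
        (by fun_prop)
      have S := (V_snd.pow 7).mul ((((((h6.mono (m := 5) (by omega)).add
        (k7.mono (m := 5) (by omega))).add (k8.mono (m := 5) (by omega))).add
        (k9.mono (m := 5) (by omega))).add (k10.mono (m := 5) (by omega))).add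
        (kP.mono (m := 5) (by omega)))
      have W := V.mul_right (V_snd.pow 12) (F := fun p : ℝ × ℝ =>
        -c ^ 11 * (p.1 - c * K (p.2 * qq c p.2)) - c ^ 11 * p.2 ^ 6 * qq c p.2 ^ 6 *
        (1 + (-6 * c) * (p.2 * qq c p.2) + a9 * (p.2 * qq c p.2) ^ 2
          + a10 * (p.2 * qq c p.2) ^ 3 + a11 * (p.2 * qq c p.2) ^ 4)) (by fun_prop)
      convert (S.mono (m := 12) (by omega)).add (W.mono (m := 12) (by omega)) using 2 with p
      have hq := qq_mul c p.2
      simp only [Function.comp, tri_apply, hφdef, hK]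
      generalize qq c p.2 = q at *
      obtain ⟨x, y⟩ := p
      simp only at *
      linear_combination ((x - c * ((y * q) ^ 7 + (-6 * c) * (y * q) ^ 8 + a9 * (y * q) ^ 9
        + a10 * (y * q) ^ 10 + a11 * (y * q) ^ 11)) * y + y ^ 7 * q ^ 6 *
        (1 + (-6 * c) * (y * q) + a9 * (y * q) ^ 2
          + a10 * (y * q) ^ 3 + a11 * (y * q) ^ 4)) * hq

/-- Scaling. -/
lemma step3 (A a10 a11 s : ℝ) (hs : s ≠ 0) : JetEquiv 11
    (fun p => (p.1, p.1 * p.2 + p.2 ^ 7 + A * p.2 ^ 9 + a10 * p.2 ^ 10 + a11 * p.2 ^ 11))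
    (fun p => (p.1, p.1 * p.2 + p.2 ^ 7 + (s ^ 2 * A) * p.2 ^ 9 + (s ^ 3 * a10) * p.2 ^ 10
      + (s ^ 4 * a11) * p.2 ^ 11)) := by
  refine ⟨tri (s ^ 6) s 0, tri (s ^ 6)⁻¹ (s ^ 7)⁻¹ 0, (tri _ _ _).contDiff, (tri _ _ _).contDiff,
    map_zero _, map_zero _, tri_bij _ (by positivity) hs, tri_bij _ (by positivity)
    (by positivity), fun i _ => ?_⟩
  congr 1
  funext p
  simp only [Function.comp, tri_apply, Prod.mk.injEq]
  constructor
  · field_simp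
    ring
  · field_simp
    ring

lemma forward {f : ℝ × ℝ → ℝ × ℝ} {g : ℝ × ℝ → ℝ} (hg : ContDiff ℝ (⊤ : ℕ∞) g)
    (hf0 : f 0 = 0) (hf : ∀ p, f p = (p.1, g p))
    (hc : ∀ i j, i + j < 8 → tcoeff g i j = if (i, j) = (1, 1) ∨ (i, j) = (0, 7) then 1 else 0)
    (hA : tcoeff g 0 9 - 7 / 12 * tcoeff g 0 8 ^ 2 ≠ 0) :
    ∃ ε : ℝ, (ε = 1 ∨ ε = -1) ∧ ∃ α β : ℝ,
        JetEquiv 11 f (fun p =>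
          (p.1, p.1 * p.2 + p.2 ^ 7 + ε * p.2 ^ 9 + α * p.2 ^ 10 + β * p.2 ^ 11)) := by
  have hfs : ContDiff ℝ (⊤ : ℕ∞) f := by
    have : f = fun p => (p.1, g p) := funext hf
    rw [this]; fun_prop
  have h1 := step1 hg hf hc
  generalize tcoeff g 0 8 = a8 at *
  generalize tcoeff g 0 9 = a9 at *
  generalize tcoeff g 0 10 = a10 at *
  generalize tcoeff g 0 11 = a11 at *
  obtain ⟨c, rfl⟩ : ∃ c, a8 = -6 * c := ⟨-a8 / 6, by ring⟩
  have hA' : a9 - 21 * c ^ 2 ≠ 0 := by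
    intro h; apply hA; linear_combination h
  have h2 := JetEquiv.trans hfs (by fun_prop) hf0 (by simp) h1 (step2 c a9 a10 a11)
  set A := a9 - 21 * c ^ 2
  have hpos : 0 < |A| := abs_pos.2 hA'
  have hs : (Real.sqrt |A|)⁻¹ ≠ 0 := by positivity
  have h3 := JetEquiv.trans hfs (by fun_prop) hf0 (by simp) h2 (step3 _ _ _ _ hs)
  refine ⟨_, ?_, _, _, h3⟩
  rw [inv_pow, Real.sq_sqrt hpos.le]
  rcases lt_or_gt_of_ne hA' with h | h
  · right; rw [abs_of_neg h]; field_simp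
  · left; rw [abs_of_pos h]; field_simp

/-! ### The converse implication -/

/-- `u(t) = O(t^n)` as `t → 0`. -/
def OO {G : Type} [NormedAddCommGroup G] (n : ℕ) (u : ℝ → G) : Prop :=
  u =O[𝓝 0] fun t : ℝ => t ^ n

section
variable {G H : Type} [NormedAddCommGroup G] [NormedSpace ℝ G] [NormedAddCommGroup H]
  [NormedSpace ℝ H]

lemma pow_bigO {m n : ℕ} (h : m ≤ n) :
    (fun t : ℝ => t ^ n) =O[𝓝 0] fun t : ℝ => t ^ m := by
  rcases h.lt_or_eq with h | h
  · exact (isLittleO_pow_pow h).isBigO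
  · subst h; exact isBigO_refl _ _

lemma OO.mono {m n : ℕ} {u : ℝ → G} (h : OO n u) (hmn : m ≤ n) : OO m u :=
  IsBigO.trans h (pow_bigO hmn)

lemma OO.add {n : ℕ} {u v : ℝ → G} (h : OO n u) (h' : OO n v) : OO n (fun t => u t + v t) :=
  IsBigO.add h h'

lemma OO.sub {n : ℕ} {u v : ℝ → G} (h : OO n u) (h' : OO n v) : OO n (fun t => u t - v t) :=
  IsBigO.sub h h'

lemma OO.mul {m n : ℕ} {u v : ℝ → ℝ} (h : OO m u) (h' : OO n v) :
    OO (m + n) (fun t => u t * v t) := by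
  have := IsBigO.mul h h'
  simpa only [OO, pow_add] using this

lemma OO_cont {c : ℝ → ℝ} (h : Continuous c) : OO 0 c := by
  simp only [OO, pow_zero]
  exact (h.tendsto 0).isBigO_one ℝ

lemma OO_pow (n : ℕ) {c : ℝ → ℝ} (h : Continuous c) : OO n (fun t => t ^ n * c t) := by
  have h1 : OO n (fun t : ℝ => t ^ n) := isBigO_refl _ _
  simpa using h1.mul (OO_cont h)

lemma OO.const_mul {n : ℕ} {u : ℝ → ℝ} (h : OO n u) (c : ℝ) : OO n (fun t => c * u t) :=
  IsBigO.const_mul_left h c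

lemma OO.fst {n : ℕ} {u : ℝ → ℝ × ℝ} (h : OO n u) : OO n (fun t => (u t).1) :=
  IsBigO.trans isBigO_fst_prod' h

lemma OO.snd {n : ℕ} {u : ℝ → ℝ × ℝ} (h : OO n u) : OO n (fun t => (u t).2) :=
  IsBigO.trans isBigO_snd_prod' h

lemma OO.pair {n : ℕ} {u v : ℝ → ℝ} (h : OO n u) (h' : OO n v) : OO n (fun t => (u t, v t)) :=
  IsBigO.prod_left h h'

lemma OO.tendsto {n : ℕ} {u : ℝ → G} (h : OO n u) (hn : n ≠ 0) : Tendsto u (𝓝 0) (𝓝 0) := by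
  refine IsBigO.trans_tendsto h ?_
  have : Tendsto (fun t : ℝ => t ^ n) (𝓝 0) (𝓝 (0 ^ n)) := (continuous_pow n).tendsto 0
  rwa [zero_pow hn] at this

lemma OO_comp {m n : ℕ} {F : G → H} (hF : F =O[𝓝 0] fun p => ‖p‖ ^ n) {γ : ℝ → G}
    (hγ : OO m γ) (hm : m ≠ 0) : OO (m * n) (fun t => F (γ t)) := by
  have h1 := hF.comp_tendsto (hγ.tendsto hm)
  have h2 := (IsBigO.norm_left hγ).pow n
  simp only [← pow_mul] at h2
  exact h1.trans h2

lemma OO_pow_sub {v w : ℝ → ℝ} (hv : OO 1 v) (hw : OO 1 w) (h : OO 4 (fun t => v t - w t))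
    (n : ℕ) : OO (n + 4) (fun t => v t ^ (n + 1) - w t ^ (n + 1)) := by
  induction n with
  | zero => simpa using h
  | succ n ih =>
    have a := hv.mul ih
    have hwp : OO (n + 1) (fun t => w t ^ (n + 1)) := by
      have := IsBigO.pow hw (n + 1)
      simpa [OO, ← pow_mul] using this
    have b := h.mul hwp
    have c := (a.mono (m := n + 1 + 4) (by omega)).add (b.mono (m := n + 1 + 4) (by omega))
    convert c using 2 with t
    ring

lemma peel {c : ℝ} {m : ℕ} {r : ℝ → ℝ} (h : OO (m + 1) (fun t => c * t ^ m + r t))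
    (hr : OO (m + 1) r) : c = 0 := by
  by_contra hc
  have h1 : OO (m + 1) (fun t => c * t ^ m) := by simpa using h.sub hr
  have h2 : OO (m + 1) (fun t : ℝ => t ^ m) := by
    have := h1.const_mul c⁻¹
    simpa [← mul_assoc, inv_mul_cancel₀ hc] using this
  have h3 : (fun t : ℝ => t ^ m) =o[𝓝 0] (fun t : ℝ => t ^ m) :=
    IsBigO.trans_isLittleO h2 (isLittleO_pow_pow (Nat.lt_succ_self m))
  refine isLittleO_irrefl ?_ h3
  have h4 : ∃ᶠ t : ℝ in 𝓝[≠] 0, t ^ m ≠ 0 := by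
    refine Eventually.frequently ?_
    filter_upwards [self_mem_nhdsWithin] with t ht
    exact pow_ne_zero m ht
  exact h4.filter_mono nhdsWithin_le_nhds

end

lemma peel4 {c6 c7 c8 c9 : ℝ}
    (h : OO 10 (fun t => c6 * t ^ 6 + c7 * t ^ 7 + c8 * t ^ 8 + c9 * t ^ 9)) :
    c6 = 0 ∧ c7 = 0 ∧ c8 = 0 ∧ c9 = 0 := by
  have e6 : c6 = 0 := by
    refine peel (m := 6) (r := fun t => t ^ 7 * (c7 + c8 * t + c9 * t ^ 2)) ?_
      (OO_pow 7 (by fun_prop))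
    convert h.mono (m := 7) (by omega) using 2 with t; ring
  subst e6
  have e7 : c7 = 0 := by
    refine peel (m := 7) (r := fun t => t ^ 8 * (c8 + c9 * t)) ?_
      (OO_pow 8 (by fun_prop))
    convert h.mono (m := 8) (by omega) using 2 with t; ring
  subst e7
  have e8 : c8 = 0 := by
    refine peel (m := 8) (r := fun t => t ^ 9 * c9) ?_
      (OO_pow 9 (by fun_prop))
    convert h.mono (m := 9) (by omega) using 2 with t; ring
  subst e8
  have e9 : c9 = 0 := by
    refine peel (m := 9) (r := fun t => t ^ 10 * 0) ?_
      (OO_pow 10 (by fun_prop))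
    convert h using 2 with t; ring
  exact ⟨rfl, rfl, rfl, e9⟩

lemma core (s a1 a2 b1 b2 p1 p2 p3 a8 a9 ε : ℝ) (u v G : ℝ → ℝ)
    (hu : OO 10 (fun t => u t - (a1 * s * t ^ 6 + a2 * ((s + 1) * t ^ 7 + ε * t ^ 9))))
    (hv : OO 4 (fun t => v t - (p1 * t + p2 * t ^ 2 + p3 * t ^ 3)))
    (hG : OO 10 (fun t => G t - (b1 * s * t ^ 6 + b2 * ((s + 1) * t ^ 7 + ε * t ^ 9))))
    (hGd : OO 10 (fun t => G t - (u t * v t + v t ^ 7 + a8 * v t ^ 8 + a9 * v t ^ 9))) :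
    b1 * s = 0 ∧ a1 * s * p1 + p1 ^ 7 = b2 * (s + 1) ∧
    a1 * s * p2 + a2 * (s + 1) * p1 + 7 * p1 ^ 6 * p2 + a8 * p1 ^ 8 = 0 ∧
    a1 * s * p3 + a2 * (s + 1) * p2 + 7 * p1 ^ 6 * p3 + 21 * p1 ^ 5 * p2 ^ 2
      + 8 * a8 * p1 ^ 7 * p2 + a9 * p1 ^ 9 = b2 * ε := by
  set U : ℝ → ℝ := fun t => a1 * s * t ^ 6 + a2 * ((s + 1) * t ^ 7 + ε * t ^ 9) with hU
  set W : ℝ → ℝ := fun t => p1 * t + p2 * t ^ 2 + p3 * t ^ 3 with hW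
  have oU : OO 6 U := by
    convert OO_pow 6 (c := fun t => a1 * s + a2 * ((s + 1) * t + ε * t ^ 3)) (by fun_prop)
      using 2 with t
    simp only [hU]; ring
  have oW : OO 1 W := by
    convert OO_pow 1 (c := fun t => p1 + p2 * t + p3 * t ^ 2) (by fun_prop)
      using 2 with t
    simp only [hW]; ring
  have ov : OO 1 v := by
    convert (hv.mono (m := 1) (by omega)).add oW using 2 with t
    ring
  have e1 := (hu.mul ov).mono (m := 10) (by omega)
  have e2 := oU.mul hv
  have e7 := OO_pow_sub ov oW hv 6
  have e8 := ((OO_pow_sub ov oW hv 7).mono (m := 10) (by omega)).const_mul a8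
  have e9 := ((OO_pow_sub ov oW hv 8).mono (m := 10) (by omega)).const_mul a9
  have tot : OO 10 (fun t => (U t * W t + W t ^ 7 + a8 * W t ^ 8 + a9 * W t ^ 9)
      - (b1 * s * t ^ 6 + b2 * ((s + 1) * t ^ 7 + ε * t ^ 9))) := by
    convert (((((hG.sub hGd).sub e1).sub e2).sub e7).sub e8).sub e9 using 2 with t
    ring
  have rest := OO_pow 10 (c := fun t => a2 * (s + 1) * p3 + a2 * ε * (p1 + p2 * t + p3 * t ^ 2)
    + (35 * p1 ^ 4 * (p2 + p3 * t) ^ 3 + 35 * p1 ^ 3 * (p2 + p3 * t) ^ 4 * t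
      + 21 * p1 ^ 2 * (p2 + p3 * t) ^ 5 * t ^ 2 + 7 * p1 * (p2 + p3 * t) ^ 6 * t ^ 3
      + (p2 + p3 * t) ^ 7 * t ^ 4)
    + 21 * p1 ^ 5 * (2 * p2 * p3 + p3 ^ 2 * t)
    + a8 * (8 * p1 ^ 7 * p3 + 28 * p1 ^ 6 * (p2 + p3 * t) ^ 2 + 56 * p1 ^ 5 * (p2 + p3 * t) ^ 3 * t
      + 70 * p1 ^ 4 * (p2 + p3 * t) ^ 4 * t ^ 2 + 56 * p1 ^ 3 * (p2 + p3 * t) ^ 5 * t ^ 3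
      + 28 * p1 ^ 2 * (p2 + p3 * t) ^ 6 * t ^ 4 + 8 * p1 * (p2 + p3 * t) ^ 7 * t ^ 5
      + (p2 + p3 * t) ^ 8 * t ^ 6)
    + a9 * ((p2 + p3 * t) * (9 * p1 ^ 8 + 36 * p1 ^ 7 * (t * (p2 + p3 * t))
      + 84 * p1 ^ 6 * (t * (p2 + p3 * t)) ^ 2 + 126 * p1 ^ 5 * (t * (p2 + p3 * t)) ^ 3
      + 126 * p1 ^ 4 * (t * (p2 + p3 * t)) ^ 4 + 84 * p1 ^ 3 * (t * (p2 + p3 * t)) ^ 5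
      + 36 * p1 ^ 2 * (t * (p2 + p3 * t)) ^ 6 + 9 * p1 * (t * (p2 + p3 * t)) ^ 7
      + (t * (p2 + p3 * t)) ^ 8))) (by fun_prop)
  have fin := tot.sub rest
  have := peel4 (c6 := -(b1 * s)) (c7 := a1 * s * p1 + p1 ^ 7 - b2 * (s + 1))
    (c8 := a1 * s * p2 + a2 * (s + 1) * p1 + 7 * p1 ^ 6 * p2 + a8 * p1 ^ 8)
    (c9 := a1 * s * p3 + a2 * (s + 1) * p2 + 7 * p1 ^ 6 * p3 + 21 * p1 ^ 5 * p2 ^ 2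
      + 8 * a8 * p1 ^ 7 * p2 + a9 * p1 ^ 9 - b2 * ε) (by
    convert fin using 2 with t
    simp only [hU, hW]
    ring)
  obtain ⟨h6, h7, h8, h9⟩ := this
  exact ⟨by linarith, by linarith, h8, by linarith⟩

lemma local_inverse {ψ : ℝ × ℝ → ℝ × ℝ} (hψ : ContDiff ℝ (⊤ : ℕ∞) ψ) (h0 : ψ 0 = 0)
    (hb : Function.Bijective (⇑(fderiv ℝ ψ 0))) :
    ∃ χ : ℝ × ℝ → ℝ × ℝ, ContDiffAt ℝ (⊤ : ℕ∞) χ 0 ∧ χ 0 = 0 ∧ ∀ᶠ p in 𝓝 0, χ (ψ p) = p := by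
  let e : (ℝ × ℝ) ≃L[ℝ] (ℝ × ℝ) := ContinuousLinearEquiv.ofBijective (fderiv ℝ ψ 0)
    (LinearMap.ker_eq_bot.2 hb.1) (LinearMap.range_eq_top.2 hb.2)
  have he : (e : ℝ × ℝ →L[ℝ] ℝ × ℝ) = fderiv ℝ ψ 0 := by
    ext <;> simp [e]
  have hs : HasStrictFDerivAt ψ (e : ℝ × ℝ →L[ℝ] ℝ × ℝ) 0 := by
    rw [he]
    exact hψ.contDiffAt.hasStrictFDerivAt (by simp)
  have hc : ContDiffAt ℝ (⊤ : ℕ∞) (hs.localInverse ψ e 0) (ψ 0) :=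
    ContDiffAt.to_localInverse hψ.contDiffAt hs.hasFDerivAt (by simp)
  refine ⟨hs.localInverse ψ e 0, ?_, ?_, hs.eventually_left_inverse⟩
  · rwa [h0] at hc
  · have := hs.localInverse_apply_image
    rwa [h0] at this

lemma quad_bigO {χ : ℝ × ℝ → ℝ × ℝ} (hχ : ContDiffAt ℝ (⊤ : ℕ∞) χ 0) (h0 : χ 0 = 0) :
    (fun p => χ p - fderiv ℝ χ 0 p) =O[𝓝 0] fun p => ‖p‖ ^ 2 := by
  have hd : ∀ᶠ p in 𝓝 (0 : ℝ × ℝ), DifferentiableAt ℝ χ p := by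
    have h1 : ContDiffAt ℝ 1 χ 0 := hχ.of_le (natle 1)
    filter_upwards [h1.eventually (by simp)] with p hp
    exact hp.differentiableAt (by simp)
  refine bigO_step (n := 1) ?_ (by simp [h0]) ?_
  · filter_upwards [hd] with p hp
    exact hp.sub (fderiv ℝ χ 0).differentiableAt
  · have h2 : DifferentiableAt ℝ (fderiv ℝ χ) 0 :=
      (hχ.fderiv_right (m := 1) (natle 2)).differentiableAt (by simp)
    have h3 := h2.isBigO_sub
    simp only [sub_zero] at h3
    simp only [pow_one]
    refine (h3.norm_right).congr' ?_ EventuallyEq.rfl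
    filter_upwards [hd] with p hp
    have := fderiv_sub hp (fderiv ℝ χ 0).differentiableAt
    rw [ContinuousLinearMap.fderiv] at this
    exact this.symm

lemma backward {f : ℝ × ℝ → ℝ × ℝ} {g : ℝ × ℝ → ℝ} (hg : ContDiff ℝ (⊤ : ℕ∞) g)
    (hf0 : f 0 = 0) (hf : ∀ p, f p = (p.1, g p))
    (hc : ∀ i j, i + j < 8 → tcoeff g i j = if (i, j) = (1, 1) ∨ (i, j) = (0, 7) then 1 else 0)
    (ε α β : ℝ) (hε : ε ≠ 0)
    (hJ : JetEquiv 11 f (fun p =>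
          (p.1, p.1 * p.2 + p.2 ^ 7 + ε * p.2 ^ 9 + α * p.2 ^ 10 + β * p.2 ^ 11))) :
    tcoeff g 0 9 - 7 / 12 * tcoeff g 0 8 ^ 2 ≠ 0 := by
  have hfs : ContDiff ℝ (⊤ : ℕ∞) f := by
    have : f = fun p => (p.1, g p) := funext hf
    rw [this]; fun_prop
  obtain ⟨R, E, hR, hE, -, hdec⟩ := decomp hg hc
  obtain ⟨φ, ψ, hφ, hψ, φ0, ψ0, bφ, bψ, hjet⟩ := hJ
  obtain ⟨χ, hχ, χ0, hχψ⟩ := local_inverse hψ ψ0 bψ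
  set h : ℝ × ℝ → ℝ × ℝ := fun p =>
    (p.1, p.1 * p.2 + p.2 ^ 7 + ε * p.2 ^ 9 + α * p.2 ^ 10 + β * p.2 ^ 11) with hh
  have hhs : ContDiff ℝ (⊤ : ℕ∞) h := by simp only [hh]; fun_prop
  have hD := ((jet_iff_V (n := 11) (hψ.comp (hfs.comp hφ)) hhs).2 hjet).bigO
  set L := fderiv ℝ χ 0
  have hL : ∀ p : ℝ × ℝ, L p = p.1 • L (1, 0) + p.2 • L (0, 1) := by
    intro p
    rw [← map_smul, ← map_smul, ← map_add]
    congr 1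
    ext <;> simp
  set v0 : ℝ × ℝ → ℝ := fun p => (φ p).2 with hv0
  have hv0s : ContDiff ℝ (⊤ : ℕ∞) v0 := by simp only [hv0]; fun_prop
  have hvT := taylor 4 hv0s
  have hv00 : tcoeff v0 0 0 = 0 := by simp [tcoeff, hv0, φ0]
  -- analysis along the curves
  have main : ∀ s : ℝ, OO 10 (fun t : ℝ => (φ (s * t ^ 6, t)).1 - ((L (1, 0)).1 * s * t ^ 6
        + (L (0, 1)).1 * ((s + 1) * t ^ 7 + ε * t ^ 9))) ∧
      OO 4 (fun t : ℝ => (φ (s * t ^ 6, t)).2 - (tcoeff v0 0 1 * t + tcoeff v0 0 2 * t ^ 2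
        + tcoeff v0 0 3 * t ^ 3)) ∧
      OO 10 (fun t : ℝ => g (φ (s * t ^ 6, t)) - ((L (1, 0)).2 * s * t ^ 6
        + (L (0, 1)).2 * ((s + 1) * t ^ 7 + ε * t ^ 9))) ∧
      OO 10 (fun t : ℝ => g (φ (s * t ^ 6, t)) -
        ((φ (s * t ^ 6, t)).1 * (φ (s * t ^ 6, t)).2 + (φ (s * t ^ 6, t)).2 ^ 7
        + tcoeff g 0 8 * (φ (s * t ^ 6, t)).2 ^ 8 + tcoeff g 0 9 * (φ (s * t ^ 6, t)).2 ^ 9)) := by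
    intro s
    have hγ : OO 1 (fun t : ℝ => ((s * t ^ 6, t) : ℝ × ℝ)) := by
      refine OO.pair ?_ ?_
      · convert OO_pow 1 (c := fun t => s * t ^ 5) (by fun_prop) using 2 with t
        ring
      · convert OO_pow 1 (c := fun t => 1) (by fun_prop) using 2 with t
        ring
    have hφγ : OO 1 (fun t : ℝ => φ (s * t ^ 6, t)) := by
      have := OO_comp (V_one hφ φ0).bigO hγ one_ne_zero
      simpa using this
    have hfφ : OO 1 (fun t : ℝ => f (φ (s * t ^ 6, t))) := by
      have := OO_comp (V_one hfs hf0).bigO hφγ one_ne_zero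
      simpa using this
    have hψf : OO 1 (fun t : ℝ => ψ (f (φ (s * t ^ 6, t)))) := by
      have := OO_comp (V_one hψ ψ0).bigO hfφ one_ne_zero
      simpa using this
    have hhγ : OO 6 (fun t : ℝ => h (s * t ^ 6, t)) := by
      refine OO.pair ?_ ?_
      · convert OO_pow 6 (c := fun t => s) (by fun_prop) using 2 with t
        ring
      · convert OO_pow 6 (c := fun t => s * t + t + ε * t ^ 3 + α * t ^ 4 + β * t ^ 5)
          (by fun_prop) using 2 with t
        ring
    have hDγ : OO 12 (fun t : ℝ => ψ (f (φ (s * t ^ 6, t))) - h (s * t ^ 6, t)) := by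
      have := OO_comp hD hγ one_ne_zero
      simpa using this
    have hstrict : HasStrictFDerivAt χ L 0 := hχ.hasStrictFDerivAt (by simp)
    have hχD : OO 12 (fun t : ℝ => f (φ (s * t ^ 6, t)) - χ (h (s * t ^ 6, t))) := by
      have h1 := hstrict.isBigO_sub.comp_tendsto
        ((hψf.tendsto one_ne_zero).prodMk_nhds (hhγ.tendsto (by norm_num)))
      have h2 : OO 12 (fun t : ℝ => χ (ψ (f (φ (s * t ^ 6, t)))) - χ (h (s * t ^ 6, t))) :=
        IsBigO.trans h1 hDγ
      refine IsBigO.congr' h2 ?_ EventuallyEq.rfl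
      filter_upwards [(hfφ.tendsto one_ne_zero).eventually hχψ] with t ht
      rw [ht]
    have hχL : OO 12 (fun t : ℝ => χ (h (s * t ^ 6, t)) - L (h (s * t ^ 6, t))) :=
      OO_comp (quad_bigO hχ χ0) hhγ (by norm_num)
    have hfL : OO 12 (fun t : ℝ => f (φ (s * t ^ 6, t)) - L (h (s * t ^ 6, t))) := by
      convert hχD.add hχL using 2 with t
      abel
    have hu : OO 10 (fun t : ℝ => (φ (s * t ^ 6, t)).1 - ((L (1, 0)).1 * s * t ^ 6
        + (L (0, 1)).1 * ((s + 1) * t ^ 7 + ε * t ^ 9))) := by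
      have r := OO_pow 10 (c := fun t => (L (0, 1)).1 * (α + β * t)) (by fun_prop)
      convert (hfL.fst.mono (m := 10) (by omega)).add r using 2 with t
      rw [hL (h (s * t ^ 6, t))]
      simp [hh, hf]
      ring
    have hu6 : OO 6 (fun t : ℝ => (φ (s * t ^ 6, t)).1) := by
      have r := OO_pow 6 (c := fun t => (L (1, 0)).1 * s
        + (L (0, 1)).1 * ((s + 1) * t + ε * t ^ 3)) (by fun_prop)
      convert (hu.mono (m := 6) (by omega)).add r using 2 with t
      ring
    refine ⟨hu, ?_, ?_, ?_⟩
    · have h1 := OO_comp hvT.bigO hγ one_ne_zero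
      have r := OO_pow 4 (c := fun t => ∑ i ∈ Finset.range 3, ∑ j ∈ Finset.range 4,
        tcoeff v0 (i + 1) j * (s ^ (i + 1) * t ^ (6 * i + 2) * t ^ j)) (by fun_prop)
      convert h1.add r using 2 with t
      simp only [Finset.sum_range_succ, Finset.sum_range_zero, hv00]
      ring
    · have r := OO_pow 10 (c := fun t => (L (0, 1)).2 * (α + β * t)) (by fun_prop)
      convert (hfL.snd.mono (m := 10) (by omega)).add r using 2 with t
      rw [hL (h (s * t ^ 6, t))]
      simp [hh, hf]
      ring
    · have hRφ := OO_comp hR.bigO hφγ one_ne_zero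
      have hEφ := OO_comp hE.bigO hφγ one_ne_zero
      have hv := hφγ.snd
      have hvp : ∀ n : ℕ, OO n (fun t : ℝ => (φ (s * t ^ 6, t)).2 ^ n) := by
        intro n
        have := IsBigO.pow hv n
        simpa [OO, ← pow_mul] using this
      have q1 := ((hu6.mul hRφ).mono (m := 10) (by omega)).add (hEφ.mono (m := 10) (by omega))
      have q2 := ((hvp 10).const_mul (tcoeff g 0 10)).add
        (((hvp 11).mono (m := 10) (by omega)).const_mul (tcoeff g 0 11))
      convert q1.add q2 using 2 with t
      rw [hdec]
      ring
  obtain ⟨m1, m2, m3, m4⟩ := main 0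
  have hp1 : tcoeff v0 0 1 ≠ 0 := by
    intro hp
    rw [hp] at m2
    have n1 : OO 2 (fun t : ℝ => (φ (0 * t ^ 6, t)).1) := by
      have r := OO_pow 2 (c := fun t => (L (0, 1)).1 * ((0 + 1) * t ^ 5 + ε * t ^ 7))
        (by fun_prop)
      convert (m1.mono (m := 2) (by omega)).add r using 2 with t
      ring
    have n2 : OO 2 (fun t : ℝ => (φ (0 * t ^ 6, t)).2) := by
      have r := OO_pow 2 (c := fun t => tcoeff v0 0 2 + tcoeff v0 0 3 * t) (by fun_prop)
      convert (m2.mono (m := 2) (by omega)).add r using 2 with t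
      ring
    have n3 : OO 2 (fun t : ℝ => φ (0, t)) := by
      have := n1.pair n2
      simpa using this
    have d1 : HasDerivAt (fun t : ℝ => φ (0, t)) 0 0 := by
      rw [hasDerivAt_iff_isLittleO]
      have e0 : φ (0, 0) = 0 := φ0
      simp only [e0, sub_zero, smul_zero]
      have := IsBigO.trans_isLittleO n3 (isLittleO_pow_pow (𝕜 := ℝ) (m := 1) (n := 2) (by omega))
      simpa using this
    have d2 : HasDerivAt (fun t : ℝ => φ (0, t)) (fderiv ℝ φ 0 (0, 1)) 0 := by
      have hl : HasDerivAt (fun t : ℝ => ((0, t) : ℝ × ℝ)) (0, 1) 0 :=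
        (hasDerivAt_const (0 : ℝ) (0 : ℝ)).prodMk (hasDerivAt_id (0 : ℝ))
      have hd : HasFDerivAt φ (fderiv ℝ φ 0) ((fun t : ℝ => ((0, t) : ℝ × ℝ)) 0) :=
        (hφ.differentiable (by simp) 0).hasFDerivAt
      exact hd.comp_hasDerivAt (0 : ℝ) hl
    have e := d2.unique d1
    have e2 := bφ.1 (e.trans (map_zero (fderiv ℝ φ 0)).symm)
    simp at e2
  obtain ⟨l1, l2, l3, l4⟩ := main 1
  obtain ⟨-, c7, c8, c9⟩ := core _ _ _ _ _ _ _ _ _ _ _ _ _ _ m1 m2 m3 m4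
  obtain ⟨-, c7', c8', c9'⟩ := core _ _ _ _ _ _ _ _ _ _ _ _ _ _ l1 l2 l3 l4
  generalize tcoeff v0 0 1 = p1 at *
  generalize tcoeff v0 0 2 = p2 at *
  generalize tcoeff v0 0 3 = p3 at *
  generalize tcoeff g 0 8 = a8 at *
  generalize tcoeff g 0 9 = a9 at *
  generalize (L (1, 0)).1 = a1 at *
  generalize (L (0, 1)).1 = a2 at *
  generalize (L (0, 1)).2 = b2 at *
  clear * - c7 c8 c9 c7' c8' c9' hp1 hε
  intro hA
  have ha1 : a1 = p1 ^ 6 := mul_right_cancel₀ hp1 (by linear_combination c7' - 2 * c7)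
  have hb2 : b2 = p1 ^ 7 := by linear_combination -c7
  subst ha1 hb2
  have ha2 : a2 = -(p1 ^ 5 * p2) :=
    mul_right_cancel₀ hp1 (by linear_combination c8' - c8)
  subst ha2
  have hp2 : p2 = - (a8 * p1 ^ 2 / 6) :=
    mul_left_cancel₀ (pow_ne_zero 6 hp1) (by linear_combination c8 / 6)
  have hp3 : p1 * p3 = p2 ^ 2 :=
    mul_left_cancel₀ (pow_ne_zero 5 hp1) (by linear_combination c9' - c9)
  have hz : p1 ^ 7 * ε = 0 := by
    subst hp2
    linear_combination -c9 + 7 * p1 ^ 5 * hp3 + p1 ^ 9 * hA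
  rcases mul_eq_zero.1 hz with h | h
  · exact pow_ne_zero 7 hp1 h
  · exact hε h

theorem stmt7 (f : ℝ × ℝ → ℝ × ℝ) (g : ℝ × ℝ → ℝ) (hf0 : f 0 = 0)
    (hform : HasForm f g 8 (fun i j => if (i, j) = (1, 1) ∨ (i, j) = (0, 7) then 1 else 0)) :
    tcoeff g 0 9 - 7 / 12 * tcoeff g 0 8 ^ 2 ≠ 0 ↔
      ∃ ε : ℝ, (ε = 1 ∨ ε = -1) ∧ ∃ α β : ℝ,
        JetEquiv 11 f (fun p =>
          (p.1, p.1 * p.2 + p.2 ^ 7 + ε * p.2 ^ 9 + α * p.2 ^ 10 + β * p.2 ^ 11)) := by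
  obtain ⟨hg, hf, hc⟩ := hform
  constructor
  · exact forward hg hf0 hf hc
  · rintro ⟨ε, hε, α, β, hJ⟩
    refine backward hg hf0 hf hc ε α β ?_ hJ
    rcases hε with rfl | rfl <;> norm_num
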